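/- arXiv:1304.0513 — 4 statements merged into one kernel-verified Lean document; each statement's English description precedes it below -/
import Mathlib

section
/- There is a constant C > 0 such that for every n ≥ 1 and every n×n 0–1 matrix A there exists an OR-circuit of size at most C·n² computing Ī⊗A; that is, there exists a finite directed acyclic graph (edge relation with irreflexive transitive closure) with at most C·n² edges, with vertices inp(x,y) and out(i,j) for (i,j),(x,y) ∈ [n]×[n], out(i,j) never equal to any inp(x,y), such that for all i,j,x,y there is a directed path from inp(x,y) to out(i,j) if and only if A(i,x) = 1 and j ≠ y. -/
open Matrix

namespace OrC

inductive Vx (n g m : ℕ) : Type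
  | T (x : Fin n) (h : Fin (2 ^ (g + 1)))
  | R (x : Fin n) (k : Fin (g + 1)) (b : Fin 2)
  | M (k : Fin (g + 1)) (b : Fin 2) (q : Fin m) (S : Finset (Fin g))
  | R2 (x : Fin n) (k : Fin (g + 1)) (b : Fin 2)
  | T2 (x : Fin n) (h : Fin (2 ^ (g + 1)))

open Vx

abbrev Code (n g m : ℕ) : Type :=
  (Fin n × Fin (2 ^ (g + 1))) ⊕ (Fin n × Fin (g + 1) × Fin 2) ⊕
    (Fin (g + 1) × Fin 2 × Fin m × Finset (Fin g)) ⊕ (Fin n × Fin (g + 1) × Fin 2) ⊕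
    (Fin n × Fin (2 ^ (g + 1)))

def dec {n g m : ℕ} : Code n g m → Vx n g m
  | .inl (x, h) => T x h
  | .inr (.inl (x, k, b)) => R x k b
  | .inr (.inr (.inl (k, b, q, S))) => M k b q S
  | .inr (.inr (.inr (.inl (x, k, b)))) => R2 x k b
  | .inr (.inr (.inr (.inr (x, h)))) => T2 x h

theorem dec_surj {n g m : ℕ} : Function.Surjective (dec (n := n) (g := g) (m := m)) := by
  intro v
  cases v with
  | T x h => exact ⟨.inl (x, h), rfl⟩
  | R x k b => exact ⟨.inr (.inl (x, k, b)), rfl⟩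
  | M k b q S => exact ⟨.inr (.inr (.inl (k, b, q, S))), rfl⟩
  | R2 x k b => exact ⟨.inr (.inr (.inr (.inl (x, k, b)))), rfl⟩
  | T2 x h => exact ⟨.inr (.inr (.inr (.inr (x, h)))), rfl⟩

section
variable {n g m : ℕ} (A : Matrix (Fin n) (Fin n) ℕ) (e : Fin n → Fin m × Fin g)
  (c : Finset (Fin g) → Fin g) (r : Fin n → Fin m → Finset (Fin g))

inductive Ed : Vx n g m → Vx n g m → Prop
  | up (x : Fin n) (h h' : Fin (2 ^ (g + 1))) (h1 : 2 ≤ h.val) (h2 : h'.val = h.val / 2) :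
      Ed (T x h) (T x h')
  | toR (x : Fin n) (h : Fin (2 ^ (g + 1))) (k : Fin (g + 1)) (b : Fin 2)
      (h1 : k.val = Nat.log 2 h.val) (h2 : b.val = h.val % 2) : Ed (T x h) (R x k b)
  | toM (x : Fin n) (k : Fin (g + 1)) (b : Fin 2) (S : Finset (Fin g)) (h1 : S.Nonempty)
      (h2 : (e x).2 = c S) : Ed (R x k b) (M k b (e x).1 S)
  | mm (k : Fin (g + 1)) (b : Fin 2) (q : Fin m) (S : Finset (Fin g)) (h1 : S.Nonempty) :
      Ed (M k b q (S.erase (c S))) (M k b q S)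
  | toR2 (i : Fin n) (k : Fin (g + 1)) (b : Fin 2) (q : Fin m) :
      Ed (M k b q (r i q)) (R2 i k b)
  | toT2 (i : Fin n) (h : Fin (2 ^ (g + 1))) (k : Fin (g + 1)) (b : Fin 2)
      (h1 : k.val = Nat.log 2 h.val) (h2 : b.val ≠ h.val % 2) : Ed (R2 i k b) (T2 i h)
  | down (i : Fin n) (h h' : Fin (2 ^ (g + 1))) (h1 : 2 ≤ h.val) (h2 : h'.val = h.val / 2) :
      Ed (T2 i h') (T2 i h)

def rk : Vx n g m → ℕ
  | T _ h => 2 ^ (g + 1) - h.val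
  | R _ _ _ => 2 ^ (g + 1) + 1
  | M _ _ _ S => 2 ^ (g + 1) + 2 + S.card
  | R2 _ _ _ => 2 ^ (g + 1) + g + 3
  | T2 _ h => 2 ^ (g + 1) + g + 4 + h.val

variable (hc : ∀ S : Finset (Fin g), S.Nonempty → c S ∈ S)

include hc in
theorem rk_lt {u v : Vx n g m} (h : Ed e c r u v) : rk u < rk v := by
  cases h with
  | up x h h' h1 h2 => simp only [rk]; have := h.isLt; omega
  | toR => simp only [rk]; omega
  | toM => simp only [rk]; omega
  | mm k b q S h1 =>
    simp only [rk]
    have := Finset.card_erase_lt_of_mem (hc S h1)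
    omega
  | toR2 i k b q =>
    simp only [rk]
    have := Finset.card_le_univ (r i q)
    simp at this
    omega
  | toT2 => simp only [rk]; omega
  | down => simp only [rk]; omega

include hc in
theorem rk_lt_trans {u v : Vx n g m} (h : Relation.TransGen (Ed e c r) u v) : rk u < rk v := by
  induction h with
  | single h => exact rk_lt e c r hc h
  | tail _ h ih => exact ih.trans (rk_lt e c r hc h)

def anc (g y h : ℕ) : Prop := ∃ t ≤ g, (2 ^ g + y) / 2 ^ t = h

theorem log_anc {g y t : ℕ} (hy : y < 2 ^ g) (ht : t ≤ g) :
    Nat.log 2 ((2 ^ g + y) / 2 ^ t) = g - t := by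
  rw [Nat.log_div_base_pow]
  congr 1
  rw [Nat.log_eq_iff (by right; constructor <;> [norm_num; positivity])]
  constructor
  · omega
  · rw [pow_succ]; omega

theorem anc_half {g y h : ℕ} (hy : y < 2 ^ g) (h2 : 2 ≤ h) (ha : anc g y h) : anc g y (h / 2) := by
  obtain ⟨t, ht, rfl⟩ := ha
  refine ⟨t + 1, ?_, by rw [pow_succ, Nat.div_div_eq_div_mul]⟩
  rcases Nat.lt_or_ge t g with h | h
  · exact h
  · obtain rfl : t = g := le_antisymm ht h
    exfalso
    rw [Nat.add_div_left _ (by positivity), Nat.div_eq_of_lt hy] at h2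
    omega

theorem anc_unique {g y h h' : ℕ} (hy : y < 2 ^ g) (ha : anc g y h) (ha' : anc g y h')
    (hl : Nat.log 2 h = Nat.log 2 h') : h = h' := by
  obtain ⟨t, ht, rfl⟩ := ha
  obtain ⟨t', ht', rfl⟩ := ha'
  rw [log_anc hy ht, log_anc hy ht'] at hl
  obtain rfl : t = t' := by omega
  rfl

def bt (g y k b : ℕ) : Prop := ∃ h, anc g y h ∧ k = Nat.log 2 h ∧ b = h % 2

def sem (x' : Fin n) (y : ℕ) : Vx n g m → Prop
  | T x h => x' = x ∧ anc g y h
  | R x k b => x' = x ∧ bt g y k b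
  | M k b q S => (e x').1 = q ∧ (e x').2 ∈ S ∧ bt g y k b
  | R2 i k b => A i x' = 1 ∧ bt g y k b
  | T2 i h => A i x' = 1 ∧ ¬ anc g y h

variable (hr : ∀ i x, (e x).2 ∈ r i (e x).1 ↔ A i x = 1)

include hc hr in
theorem sem_step {x' : Fin n} {y : ℕ} (hy : y < 2 ^ g) {u v : Vx n g m} (h : Ed e c r u v)
    (hu : sem A e x' y u) : sem A e x' y v := by
  cases h with
  | up x h h' h1 h2 =>
    refine ⟨hu.1, ?_⟩
    rw [h2]
    exact anc_half hy h1 hu.2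
  | toR x h k b h1 h2 => exact ⟨hu.1, h.val, hu.2, h1, h2⟩
  | toM x k b S h1 h2 =>
    obtain ⟨rfl, hb⟩ := hu
    exact ⟨rfl, h2 ▸ hc S h1, hb⟩
  | mm k b q S h1 => exact ⟨hu.1, Finset.mem_of_mem_erase hu.2.1, hu.2.2⟩
  | toR2 i k b q =>
    obtain ⟨rfl, h2, hb⟩ := hu
    exact ⟨(hr _ _).1 h2, hb⟩
  | toT2 i h k b h1 h2 =>
    obtain ⟨h3, h', h4, h5, h6⟩ := hu
    refine ⟨h3, fun h7 => ?_⟩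
    have := anc_unique hy h4 h7 (by omega)
    subst this
    exact h2 h6
  | down i h h' h1 h2 =>
    refine ⟨hu.1, fun h3 => hu.2 ?_⟩
    rw [h2]
    exact anc_half hy h1 h3

include hc hr in
theorem sem_path {x' : Fin n} {y : ℕ} (hy : y < 2 ^ g) {u v : Vx n g m}
    (h : Relation.ReflTransGen (Ed e c r) u v)
    (hu : sem A e x' y u) : sem A e x' y v := by
  induction h with
  | refl => exact hu
  | tail _ h ih => exact sem_step A e c r hc hr hy h ih

theorem two_le_div {g y t : ℕ} (ht : t + 1 ≤ g) : 2 ≤ (2 ^ g + y) / 2 ^ t := by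
  rw [Nat.le_div_iff_mul_le (by positivity)]
  have : 2 ^ (t + 1) ≤ 2 ^ g := Nat.pow_le_pow_right (by norm_num) ht
  rw [pow_succ] at this
  omega

theorem div_lt {g y t : ℕ} (hy : y < 2 ^ g) : (2 ^ g + y) / 2 ^ t < 2 ^ (g + 1) := by
  refine lt_of_le_of_lt (Nat.div_le_self _ _) ?_
  rw [pow_succ]; omega

theorem path_up (x : Fin n) {y : ℕ} (hy : y < 2 ^ g) (t : ℕ) (ht : t ≤ g)
    (h0 : 2 ^ g + y < 2 ^ (g + 1)) :
    Relation.ReflTransGen (Ed e c r) (T x ⟨2 ^ g + y, h0⟩)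
      (T x ⟨(2 ^ g + y) / 2 ^ t, div_lt hy⟩) := by
  induction t with
  | zero => simp only [pow_zero, Nat.div_one]; exact .refl
  | succ t ih =>
    refine (ih (by omega)).tail (Ed.up _ _ _ (two_le_div ht) ?_)
    simp only [pow_succ, Nat.div_div_eq_div_mul]

theorem path_down (x : Fin n) {y : ℕ} (hy : y < 2 ^ g) (t : ℕ) (ht : t ≤ g)
    (h0 : 2 ^ g + y < 2 ^ (g + 1)) :
    Relation.ReflTransGen (Ed e c r) 
      (T2 x ⟨(2 ^ g + y) / 2 ^ t, div_lt hy⟩) (T2 x ⟨2 ^ g + y, h0⟩) := by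
  induction t with
  | zero => simp only [pow_zero, Nat.div_one]; exact .refl
  | succ t ih =>
    refine Relation.ReflTransGen.head (Ed.down _ _ _ (two_le_div ht) ?_) (ih (by omega))
    simp only [pow_succ, Nat.div_div_eq_div_mul]

include hc in
theorem path_mid (x : Fin n) (k : Fin (g + 1)) (b : Fin 2) (S : Finset (Fin g)) :
    (e x).2 ∈ S → Relation.ReflTransGen (Ed e c r) (R x k b) (M k b (e x).1 S) := by
  induction S using Finset.strongInduction with
  | H S ih =>
    intro hs
    have hne : S.Nonempty := ⟨_, hs⟩
    by_cases h : (e x).2 = c S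
    · exact .single (Ed.toM x k b S hne h)
    · exact (ih _ (Finset.erase_ssubset (hc S hne)) (Finset.mem_erase.2 ⟨h, hs⟩)).tail
        (Ed.mm k b _ S hne)

theorem exists_bit {g y j : ℕ} (hy : y < 2 ^ g) (hj : j < 2 ^ g) (h : j ≠ y) :
    ∃ t ≤ g, (2 ^ g + y) / 2 ^ t % 2 ≠ (2 ^ g + j) / 2 ^ t % 2 := by
  by_contra! hcon
  apply h
  have : 2 ^ g + j = 2 ^ g + y := by
    apply Nat.eq_of_testBit_eq
    intro t
    rcases Nat.lt_or_ge g t with ht | ht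
    · have h1 : 2 ^ (g + 1) ≤ 2 ^ t := Nat.pow_le_pow_right (by norm_num) ht
      rw [pow_succ] at h1
      rw [Nat.testBit_lt_two_pow (by omega), Nat.testBit_lt_two_pow (by omega)]
    · rw [Nat.testBit_eq_decide_div_mod_eq, Nat.testBit_eq_decide_div_mod_eq, hcon t ht]
  omega

include hc hr in
theorem path_iff (hg : n ≤ 2 ^ g) (i j x y : Fin n) (h0 : ∀ y : Fin n, 2 ^ g + y.val < 2 ^ (g + 1)) :
    Relation.ReflTransGen (Ed e c r) (T x ⟨2 ^ g + y, h0 y⟩) (T2 i ⟨2 ^ g + j, h0 j⟩) ↔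
      A i x = 1 ∧ j ≠ y := by
  have hy : y.val < 2 ^ g := by omega
  have hj : j.val < 2 ^ g := by omega
  constructor
  · intro h
    obtain ⟨h1, h2⟩ := sem_path A e c r hc hr (x' := x) hy h ⟨rfl, 0, by omega, by simp⟩
    refine ⟨h1, ?_⟩
    rintro rfl
    exact h2 ⟨0, by omega, by simp⟩
  · rintro ⟨h1, h2⟩
    obtain ⟨t, ht, hb⟩ := exists_bit hy hj (fun h => h2 (Fin.ext h))
    let k : Fin (g + 1) := ⟨g - t, by omega⟩
    let b : Fin 2 := ⟨(2 ^ g + y.val) / 2 ^ t % 2, Nat.mod_lt _ (by norm_num)⟩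
    refine (path_up e c r x hy t ht (h0 y)).trans ?_
    refine .head (Ed.toR x _ k b (log_anc hy ht).symm rfl) ?_
    refine (path_mid e c r hc x k b (r i (e x).1) ((hr i x).2 h1)).trans ?_
    refine .head (Ed.toR2 i k b _) ?_
    refine .head (Ed.toT2 i ⟨(2 ^ g + j) / 2 ^ t, div_lt hj⟩ k b (log_anc hj ht).symm hb) ?_
    exact path_down e c r i hj t ht (h0 j)

abbrev Lab (n g m : ℕ) : Type :=
  (Fin n × Fin (2 ^ (g + 1))) ⊕ (Fin n × Fin (2 ^ (g + 1))) ⊕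
  (Fin n × Fin (2 ^ (g + 1))) ⊕ (Fin n × Fin (2 ^ (g + 1))) ⊕
    (Fin (g + 1) × Fin 2 × Fin m × Finset (Fin g)) ⊕
    (Fin (g + 1) × Fin 2 × Fin m × Finset (Fin g)) ⊕
    (Fin n × Fin (g + 1) × Fin 2 × Fin m)

def hlf (h : Fin (2 ^ (g + 1))) : Fin (2 ^ (g + 1)) :=
  ⟨h.val / 2, lt_of_le_of_lt (Nat.div_le_self _ _) h.isLt⟩

def lg (h : Fin (2 ^ (g + 1))) : Fin (g + 1) := ⟨min g (Nat.log 2 h.val), by omega⟩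

def ef (d : Fin m × Fin g → Fin n) : Lab n g m → Vx n g m × Vx n g m
  | .inl (x, h) => (T x h, T x (hlf h))
  | .inr (.inl (x, h)) => (T x h, R x (lg h) ⟨h.val % 2, by omega⟩)
  | .inr (.inr (.inl (x, h))) => (R2 x (lg h) ⟨1 - h.val % 2, by omega⟩, T2 x h)
  | .inr (.inr (.inr (.inl (x, h)))) => (T2 x (hlf h), T2 x h)
  | .inr (.inr (.inr (.inr (.inl (k, b, q, S))))) => (R (d (q, c S)) k b, M k b q S)
  | .inr (.inr (.inr (.inr (.inr (.inl (k, b, q, S)))))) =>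
      (M k b q (S.erase (c S)), M k b q S)
  | .inr (.inr (.inr (.inr (.inr (.inr (i, k, b, q)))))) => (M k b q (r i q), R2 i k b)

theorem lg_eq (h : Fin (2 ^ (g + 1))) (k : Fin (g + 1)) (hk : k.val = Nat.log 2 h.val) :
    k = lg h := by
  apply Fin.ext
  simp only [lg]
  omega

theorem ed_sub (d : Fin m × Fin g → Fin n) (hd : ∀ x, d (e x) = x) :
    {p : Vx n g m × Vx n g m | Ed e c r p.1 p.2} ⊆ Set.range (ef c r d) := by
  rintro ⟨u, v⟩ h
  change Ed e c r u v at h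
  cases h with
  | up x h h' h1 h2 =>
    obtain rfl : h' = hlf h := Fin.ext h2
    exact ⟨.inl (x, h), rfl⟩
  | toR x h k b h1 h2 =>
    obtain rfl := lg_eq h k h1
    obtain rfl : b = ⟨h.val % 2, Nat.mod_lt _ (by norm_num)⟩ := Fin.ext h2
    exact ⟨.inr (.inl (x, h)), rfl⟩
  | toM x k b S h1 h2 =>
    refine ⟨.inr (.inr (.inr (.inr (.inl (k, b, (e x).1, S))))), ?_⟩
    simp only [ef, ← h2, Prod.mk.eta, hd]
  | mm k b q S h1 => exact ⟨.inr (.inr (.inr (.inr (.inr (.inl (k, b, q, S)))))), rfl⟩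
  | toR2 i k b q => exact ⟨.inr (.inr (.inr (.inr (.inr (.inr (i, k, b, q)))))), rfl⟩
  | toT2 i h k b h1 h2 =>
    obtain rfl := lg_eq h k h1
    obtain rfl : b = ⟨1 - h.val % 2, by omega⟩ := Fin.ext (by
      have := b.isLt
      simp only
      omega)
    exact ⟨.inr (.inr (.inl (i, h))), rfl⟩
  | down i h h' h1 h2 =>
    obtain rfl : h' = hlf h := Fin.ext h2
    exact ⟨.inr (.inr (.inr (.inl (i, h)))), rfl⟩

theorem ed_card (d : Fin m × Fin g → Fin n) (hd : ∀ x, d (e x) = x) :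
    {p : Vx n g m × Vx n g m | Ed e c r p.1 p.2}.ncard ≤ Fintype.card (Lab n g m) := by
  refine (Set.ncard_le_ncard (ed_sub e c r d hd) (Set.finite_range _)).trans ?_
  rw [← Set.image_univ]
  refine (Set.ncard_image_le Set.finite_univ).trans ?_
  rw [Set.ncard_univ, Nat.card_eq_fintype_card]

end

theorem lab_card {n g : ℕ} (hg1 : 1 ≤ g) (hgn : g ≤ n) (hp : 2 ^ g ≤ 2 * n) :
    Fintype.card (Lab n g (n / g + 1)) ≤ 56 * n ^ 2 := by
  simp only [Fintype.card_sum, Fintype.card_prod, Fintype.card_fin, Fintype.card_finset]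
  have hm : (g + 1) * (n / g + 1) ≤ 4 * n := by
    have h1 : g * (n / g) ≤ n := Nat.mul_div_le n g
    have h2 : n / g ≤ n := Nat.div_le_self _ _
    nlinarith
  have h3 : n * 2 ^ (g + 1) ≤ n * (4 * n) := Nat.mul_le_mul_left _ (by rw [pow_succ]; omega)
  have h4 : ((g + 1) * (n / g + 1)) * 2 ^ g ≤ (4 * n) * (2 * n) := Nat.mul_le_mul hm hp
  have h5 : n * ((g + 1) * (n / g + 1)) ≤ n * (4 * n) := Nat.mul_le_mul_left _ hm
  nlinarith

end OrC

/-- there is a constant `C > 0` such that for every `n ≥ 1` and every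
`n × n` 0–1 matrix `A` there is an OR-circuit with at most `C * n ^ 2` edges
computing `Ī ⊗ A`: a finite DAG with inputs `inp (x, y)`, outputs `out (i, j)`,
such that `out (i, j)` is reachable from `inp (x, y)` iff `A i x = 1 ∧ j ≠ y`. -/
theorem or_circuit_coidentity_tensor_upper_bound :
    ∃ C : ℕ, 0 < C ∧ ∀ n : ℕ, 1 ≤ n → ∀ A : Matrix (Fin n) (Fin n) ℕ,
      (∀ i j, A i j = 0 ∨ A i j = 1) →
      ∃ (V : Type) (_ : Fintype V) (E : V → V → Prop)
        (inp out : Fin n × Fin n → V),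
        (∀ v, ¬ Relation.TransGen E v v) ∧
        (∀ p q, out p ≠ inp q) ∧
        {p : V × V | E p.1 p.2}.ncard ≤ C * n ^ 2 ∧
        (∀ i j x y : Fin n,
          Relation.ReflTransGen E (inp (x, y)) (out (i, j)) ↔ A i x = 1 ∧ j ≠ y) := by
  classical
  refine ⟨56, by norm_num, fun n hn A _ => ?_⟩
  obtain ⟨g, hg⟩ : ∃ g, g = Nat.size n := ⟨_, rfl⟩
  have hlt : n < 2 ^ g := hg ▸ Nat.lt_size_self n
  have hg1 : 1 ≤ g := by
    rcases Nat.eq_zero_or_pos g with h | h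
    · subst h; simp at hlt; omega
    · exact h
  have hgn : g ≤ n := hg ▸ Nat.size_le.2 Nat.lt_two_pow_self
  have hp : 2 ^ g ≤ 2 * n := by
    have h1 : 2 ^ (g - 1) ≤ n := Nat.lt_size.1 (by omega)
    obtain ⟨k, rfl⟩ : ∃ k, g = k + 1 := ⟨g - 1, by omega⟩
    rw [pow_succ]
    simp at h1
    omega
  let m := n / g + 1
  let e : Fin n → Fin m × Fin g := fun x =>
    (⟨x.val / g, Nat.lt_succ_of_le (Nat.div_le_div_right x.isLt.le)⟩,
      ⟨x.val % g, Nat.mod_lt _ hg1⟩)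
  have he : Function.Injective e := by
    intro x x' h
    simp only [e, Prod.mk.injEq, Fin.mk.injEq] at h
    apply Fin.ext
    rw [← Nat.div_add_mod x.val g, ← Nat.div_add_mod x'.val g, h.1, h.2]
  haveI : Nonempty (Fin n) := ⟨⟨0, hn⟩⟩
  let c : Finset (Fin g) → Fin g := fun S => if h : S.Nonempty then h.choose else ⟨0, hg1⟩
  have hc : ∀ S : Finset (Fin g), S.Nonempty → c S ∈ S := by
    intro S h
    simp only [c, dif_pos h]
    exact h.choose_spec
  let r : Fin n → Fin m → Finset (Fin g) := fun i q =>
    Finset.univ.filter (fun s => ∃ x, e x = (q, s) ∧ A i x = 1)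
  have hr : ∀ i x, (e x).2 ∈ r i (e x).1 ↔ A i x = 1 := by
    intro i x
    simp only [r, Finset.mem_filter, Finset.mem_univ, true_and, Prod.mk.eta]
    constructor
    · rintro ⟨x', h1, h2⟩
      exact he h1 ▸ h2
    · intro h
      exact ⟨x, rfl, h⟩
  have h0 : ∀ y : Fin n, 2 ^ g + y.val < 2 ^ (g + 1) := by
    intro y
    rw [pow_succ]
    omega
  refine ⟨OrC.Vx n g m, Fintype.ofSurjective OrC.dec OrC.dec_surj, OrC.Ed e c r,
    fun p => .T p.1 ⟨2 ^ g + p.2.val, h0 p.2⟩, fun p => .T2 p.1 ⟨2 ^ g + p.2.val, h0 p.2⟩,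
    ?_, ?_, ?_, ?_⟩
  · intro v hv
    exact lt_irrefl _ (OrC.rk_lt_trans e c r hc hv)
  · intro p q h
    cases h
  · exact (OrC.ed_card e c r (Function.invFun e) (Function.leftInverse_invFun he)).trans
      (OrC.lab_card hg1 hgn hp)
  · intro i j x y
    exact OrC.path_iff A e c r hc hr hlt.le i j x y h0
end

section
/- Let n ≥ 1 and suppose P and Q are n×r matrices with nonnegative integer entries such that for all i, j ∈ [n]: (P·Qᵀ)(i,j) ≠ 0 if and only if i ≠ j. Then n ≤ 2^r. (In other words, the boolean rank of the complement of the identity matrix is at least log₂ n.) -/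
open Matrix

/-- the boolean rank of the complement of the identity matrix is at
least `log₂ n`: if `P, Q` are `n × r` nonnegative-integer matrices with
`(P * Qᵀ) i j ≠ 0` iff `i ≠ j`, then `n ≤ 2 ^ r`. -/
theorem or_rank_coidentity_lower_bound
    {n r : ℕ} (hn : 1 ≤ n)
    (P Q : Matrix (Fin n) (Fin r) ℕ)
    (h : ∀ i j : Fin n, (P * Qᵀ) i j ≠ 0 ↔ i ≠ j) :
    n ≤ 2 ^ r := by
  have inj : Function.Injective (fun i : Fin n => Finset.univ.filter (fun k => P i k ≠ 0)) := by
    intro i j hij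
    by_contra hne
    have h1 := (h i j).2 hne
    rw [Matrix.mul_apply] at h1
    obtain ⟨k, _, hk⟩ := Finset.exists_ne_zero_of_sum_ne_zero h1
    rw [Matrix.transpose_apply] at hk
    have hP : P j k ≠ 0 := by
      have hm : k ∈ Finset.univ.filter (fun k => P i k ≠ 0) := by
        simp [left_ne_zero_of_mul hk]
      have hm2 : k ∈ Finset.univ.filter (fun k => P j k ≠ 0) := by
        have e : Finset.univ.filter (fun k => P i k ≠ 0)
          = Finset.univ.filter (fun k => P j k ≠ 0) := hij
        rw [← e]; exact hm
      exact (Finset.mem_filter.1 hm2).2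
    refine (h j j).1 ?_ rfl
    rw [Matrix.mul_apply]
    intro h0
    have h2 := (Finset.sum_eq_zero_iff.1 h0) k (Finset.mem_univ k)
    rw [Matrix.transpose_apply] at h2
    exact mul_ne_zero hP (right_ne_zero_of_mul hk) h2
  have := Fintype.card_le_of_injective _ inj
  simpa using this
end

section
/- Let D be a nonempty finite set of vectors in GF(2)ⁿ and set m = 2·⌈log₂ |D|⌉ + 1. Then there exists an m×n matrix P over GF(2) such that the map x ↦ P·x is injective on D. -/
open Matrix

lemma half_count {n : ℕ} (z : Fin n → ZMod 2) (hz : z ≠ 0) :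
    2 * (Finset.univ.filter fun r : Fin n → ZMod 2 => r ⬝ᵥ z = 0).card
      = Fintype.card (Fin n → ZMod 2) := by
  obtain ⟨i, hi⟩ := Function.ne_iff.mp hz
  have key : ∀ a : ZMod 2, a ≠ 0 → a = 1 := by decide
  have h1 : z i = 1 := key _ hi
  have h2 : (Finset.univ.filter fun r : Fin n → ZMod 2 => r ⬝ᵥ z = 0).card
      = (Finset.univ.filter fun r : Fin n → ZMod 2 => ¬ r ⬝ᵥ z = 0).card := by
    refine Finset.card_equiv (Equiv.addRight (Pi.single i (1 : ZMod 2))) ?_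
    intro r
    simp only [Finset.mem_filter, Finset.mem_univ, true_and, Equiv.coe_addRight,
      add_dotProduct, single_dotProduct, h1, one_mul]
    generalize r ⬝ᵥ z = a
    revert a
    decide
  have h3 := Finset.card_filter_add_card_filter_not (s := Finset.univ)
    (fun r : Fin n → ZMod 2 => r ⬝ᵥ z = 0)
  rw [← Finset.card_univ]
  omega

lemma exists_row {n : ℕ} (S : Finset (Fin n → ZMod 2)) (hS : ∀ z ∈ S, z ≠ 0) :
    ∃ r : Fin n → ZMod 2, 2 * (S.filter fun z => r ⬝ᵥ z = 0).card ≤ S.card := by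
  by_contra! hc
  have h1 : ∑ r : Fin n → ZMod 2, S.card
      < ∑ r : Fin n → ZMod 2, 2 * (S.filter fun z => r ⬝ᵥ z = 0).card :=
    Finset.sum_lt_sum_of_nonempty Finset.univ_nonempty fun r _ => hc r
  have h2 : ∑ r : Fin n → ZMod 2, 2 * (S.filter fun z => r ⬝ᵥ z = 0).card
      = ∑ z ∈ S, 2 * (Finset.univ.filter fun r : Fin n → ZMod 2 => r ⬝ᵥ z = 0).card := by
    simp only [← Finset.mul_sum, Finset.card_filter]
    rw [Finset.sum_comm]
  rw [h2, Finset.sum_congr rfl fun z hz => half_count z (hS z hz), Finset.sum_const,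
    Finset.sum_const, Finset.card_univ, smul_eq_mul, smul_eq_mul, mul_comm] at h1
  exact lt_irrefl _ h1

lemma exists_mat {n : ℕ} (m : ℕ) : ∀ (S : Finset (Fin n → ZMod 2)), (∀ z ∈ S, z ≠ 0) →
    S.card < 2 ^ m → ∃ P : Matrix (Fin m) (Fin n) (ZMod 2), ∀ z ∈ S, P.mulVec z ≠ 0 := by
  induction m with
  | zero =>
    intro S _ hc
    have : S = ∅ := by simpa using hc
    subst this
    exact ⟨0, by simp⟩
  | succ m ih =>
    intro S hS hc
    obtain ⟨r, hr⟩ := exists_row S hS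
    obtain ⟨P, hP⟩ := ih (S.filter fun z => r ⬝ᵥ z = 0)
      (fun z hz => hS z (Finset.mem_filter.mp hz).1) (by rw [pow_succ] at hc; omega)
    refine ⟨Matrix.of (Fin.cons r P), fun z hz h0 => ?_⟩
    have hz0 : r ⬝ᵥ z = 0 := congrFun h0 0
    refine hP z (Finset.mem_filter.mpr ⟨hz, hz0⟩) ?_
    funext j
    exact congrFun h0 j.succ

/-- existence content of Miltersen's theorem: for every nonempty
finite set `D` of vectors in `GF(2)ⁿ` there is an `m × n` matrix `P` over
`GF(2)`, with `m = 2 * ⌈log₂ |D|⌉ + 1`, such that `x ↦ P.mulVec x` is injective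
on `D`. -/
theorem exists_injective_compression
    {n : ℕ} (D : Finset (Fin n → ZMod 2)) (hD : D.Nonempty) :
    ∃ P : Matrix (Fin (2 * Nat.clog 2 D.card + 1)) (Fin n) (ZMod 2),
      Set.InjOn (fun x => P.mulVec x) ↑D := by
  classical
  obtain ⟨P, hP⟩ := exists_mat (2 * Nat.clog 2 D.card + 1)
    (((D ×ˢ D).image fun p => p.1 - p.2).erase 0)
    (fun z hz => Finset.ne_of_mem_erase hz) (by
      have h1 : D.card ≤ 2 ^ Nat.clog 2 D.card := Nat.le_pow_clog (by norm_num) _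
      calc _ ≤ ((D ×ˢ D).image fun p => p.1 - p.2).card := Finset.card_erase_le
        _ ≤ (D ×ˢ D).card := Finset.card_image_le
        _ = D.card * D.card := Finset.card_product _ _
        _ ≤ 2 ^ Nat.clog 2 D.card * 2 ^ Nat.clog 2 D.card := Nat.mul_le_mul h1 h1
        _ = 2 ^ (2 * Nat.clog 2 D.card) := by rw [← pow_add, two_mul]
        _ < _ := Nat.pow_lt_pow_right (by norm_num) (Nat.lt_succ_self _))
  refine ⟨P, fun x hx y hy hxy => ?_⟩
  by_contra hne
  refine hP (x - y) (Finset.mem_erase.mpr ⟨sub_ne_zero.mpr hne,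
    Finset.mem_image.mpr ⟨(x, y), Finset.mk_mem_product hx hy, rfl⟩⟩) ?_
  rw [Matrix.mulVec_sub]
  exact sub_eq_zero.mpr hxy
end

section
/- Let P be an m×n matrix over GF(2) = ZMod 2 such that for every injective map J : Fin k → Fin n the k columns of P indexed by J are linearly independent (in particular k ≤ m). Then for every pair of injective maps I, J : Fin k → Fin n and every k×k matrix M over GF(2), the number of m×m matrices R over GF(2) such that the k×k submatrix of Pᵀ·R·P with rows I and columns J equals M (i.e., (Pᵀ·R·P)(I a, J b) = M(a,b) for all a,b) is exactly 2^(m²−k²). In particular, if R is uniformly random, the matrix A = Pᵀ·R·P is k-uniform: every k×k submatrix of A is uniformly distributed on GF(2)^(k×k). -/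
open Matrix

theorem left_inv_aux {m k : ℕ} (A : Matrix (Fin m) (Fin k) (ZMod 2))
    (h : LinearIndependent (ZMod 2) (fun a : Fin k => fun i : Fin m => A i a)) :
    ∃ B : Matrix (Fin k) (Fin m) (ZMod 2), B * A = 1 := by
  have hinj : Function.Injective A.mulVec := Matrix.mulVec_injective_iff.2 h
  obtain ⟨g, hg⟩ := LinearMap.exists_leftInverse_of_injective (Matrix.toLin' A)
    (LinearMap.ker_eq_bot.2 hinj)
  refine ⟨LinearMap.toMatrix' g, ?_⟩
  have := congrArg LinearMap.toMatrix' hg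
  rwa [LinearMap.toMatrix'_comp, LinearMap.toMatrix'_toLin', LinearMap.toMatrix'_id] at this

/-- if every `k` columns of the `m × n` matrix `P` over `GF(2)` are
linearly independent, then for all injective `I, J : Fin k → Fin n` and every
`k × k` matrix `M` over `GF(2)`, exactly `2^(m² - k²)` of the `m × m` matrices
`R` satisfy `(Pᵀ * R * P) (I a) (J b) = M a b` for all `a, b`; in particular,
for uniformly random `R` the matrix `Pᵀ * R * P` is `k`-uniform. -/
theorem conjugated_submatrix_fiber_count
    {m n k : ℕ} (P : Matrix (Fin m) (Fin n) (ZMod 2))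
    (hcols : ∀ J : Fin k → Fin n, Function.Injective J →
      LinearIndependent (ZMod 2) (fun a : Fin k => fun i : Fin m => P i (J a))) :
    ∀ I J : Fin k → Fin n, Function.Injective I → Function.Injective J →
      ∀ M : Matrix (Fin k) (Fin k) (ZMod 2),
        {R : Matrix (Fin m) (Fin m) (ZMod 2) |
            ∀ a b, (Pᵀ * R * P) (I a) (J b) = M a b}.ncard = 2 ^ (m ^ 2 - k ^ 2) := by
  intro I J hI hJ M
  obtain ⟨B, hB⟩ := left_inv_aux (P.submatrix id I) (hcols I hI)
  obtain ⟨C, hC⟩ := left_inv_aux (P.submatrix id J) (hcols J hJ)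
  have hB' : (P.submatrix id I)ᵀ * Bᵀ = 1 := by
    rw [← Matrix.transpose_mul, hB, Matrix.transpose_one]
  let f : Matrix (Fin m) (Fin m) (ZMod 2) →ₗ[ZMod 2] Matrix (Fin k) (Fin k) (ZMod 2) :=
    { toFun := fun R => (P.submatrix id I)ᵀ * R * (P.submatrix id J)
      map_add' := fun X Y => by rw [Matrix.mul_add, Matrix.add_mul]
      map_smul' := fun c X => by simp }
  have hf : ∀ R, f R = (P.submatrix id I)ᵀ * R * (P.submatrix id J) := fun _ => rfl
  have hsec : ∀ N, f (Bᵀ * N * C) = N := by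
    intro N
    rw [hf]
    calc _ = ((P.submatrix id I)ᵀ * Bᵀ) * N * (C * P.submatrix id J) := by
          simp only [Matrix.mul_assoc]
      _ = N := by rw [hB', hC, Matrix.one_mul, Matrix.mul_one]
  have hent : ∀ R a b, (Pᵀ * R * P) (I a) (J b) = f R a b := fun R a b => rfl
  have hset : {R : Matrix (Fin m) (Fin m) (ZMod 2) |
      ∀ a b, (Pᵀ * R * P) (I a) (J b) = M a b} =
      (fun R => Bᵀ * M * C + R) '' (LinearMap.ker f : Set (Matrix (Fin m) (Fin m) (ZMod 2))) := by
    ext R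
    have h1 : (∀ a b, (Pᵀ * R * P) (I a) (J b) = M a b) ↔ f R = M := by
      simp only [hent]
      exact ⟨fun h => Matrix.ext h, fun h a b => by rw [h]⟩
    rw [Set.mem_setOf_eq, h1]
    constructor
    · intro h
      refine ⟨R - Bᵀ * M * C, ?_, add_sub_cancel _ _⟩
      rw [SetLike.mem_coe, LinearMap.mem_ker, map_sub, hsec, h, sub_self]
    · rintro ⟨S, hS, rfl⟩
      rw [SetLike.mem_coe, LinearMap.mem_ker] at hS
      change f (Bᵀ * M * C + S) = M
      rw [map_add, hS, hsec, add_zero]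
  rw [hset, Set.ncard_image_of_injective _ (add_right_injective _)]
  have hr := LinearMap.finrank_range_add_finrank_ker f
  rw [LinearMap.range_eq_top.2 (fun N => ⟨_, hsec N⟩), finrank_top, Module.finrank_matrix,
    Module.finrank_matrix] at hr
  simp only [Fintype.card_fin, Module.finrank_self, mul_one] at hr
  have hk : m ^ 2 - k ^ 2 = Module.finrank (ZMod 2) (LinearMap.ker f) := by
    rw [pow_two, pow_two, ← hr, Nat.add_sub_cancel_left]
  rw [hk, ← Nat.card_coe_set_eq]
  have := Module.natCard_eq_pow_finrank (K := ZMod 2) (V := LinearMap.ker f)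
  rw [Nat.card_zmod] at this
  exact this
end
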